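/- Let k be a field, n a natural number, and A and B noetherian k-algebras such that A ⊗_k B is noetherian. If A and B both satisfy Serre's condition (S_n), then A ⊗_k B satisfies the condition (C_{n+1}). -/

import Mathlib

noncomputable section

open TensorProduct

universe u v w

/-- The depth of the ideal `I` on the module `M`: the supremum of lengths of
`M`-regular sequences with entries in `I`. -/
noncomputable def idealDepth (A : Type u) [CommRing A] (I : Ideal A)
    (M : Type v) [AddCommGroup M] [Module A M] : ℕ∞ :=
  sSup {n : ℕ∞ | ∃ rs : List A, (rs.length : ℕ∞) = n ∧ (∀ r ∈ rs, r ∈ I) ∧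
    RingTheory.Sequence.IsRegular M rs}

/-- The depth of a module over a local ring. -/
noncomputable def localDepth (A : Type u) [CommRing A] [IsLocalRing A]
    (M : Type v) [AddCommGroup M] [Module A M] : ℕ∞ :=
  idealDepth A (IsLocalRing.maximalIdeal A) M

/-- The (Krull) dimension of a module, i.e. the Krull dimension of its support. -/
noncomputable def supportDim (A : Type u) [CommRing A]
    (M : Type v) [AddCommGroup M] [Module A M] : WithBot ℕ∞ :=
  Order.krullDim (Module.support A M)

/-- `depth (M_P)` : the depth of the localization of `M` at a prime `P`,
over the local ring `A_P`. -/
noncomputable def depthAt (A : Type u) [CommRing A]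
    (M : Type v) [AddCommGroup M] [Module A M] (P : PrimeSpectrum A) : ℕ∞ :=
  localDepth (Localization.AtPrime P.asIdeal) (LocalizedModule P.asIdeal.primeCompl M)

/-- `ht_M(P) = dim (M_P)` : the height of a prime `P` in the support of `M`,
i.e. the dimension of the localized module `M_P` over `A_P`. -/
noncomputable def heightAt (A : Type u) [CommRing A]
    (M : Type v) [AddCommGroup M] [Module A M] (P : PrimeSpectrum A) : WithBot ℕ∞ :=
  supportDim (Localization.AtPrime P.asIdeal) (LocalizedModule P.asIdeal.primeCompl M)

/-- Serre's condition `(S_n)` for a module: for every `P` in the support,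
`depth (M_P) ≥ min (n, ht_M(P))`. -/
def SerreCondS (A : Type u) [CommRing A] (n : ℕ)
    (M : Type v) [AddCommGroup M] [Module A M] : Prop :=
  ∀ P ∈ Module.support A M,
    min (n : WithBot ℕ∞) (heightAt A M P) ≤ (depthAt A M P : WithBot ℕ∞)

/-- The condition `(C_n)` for a module: for every `P` in the support,
`depth (M_P) ≥ min (n, ht_M(P)) - 1`, equivalently
`min (n, ht_M(P)) ≤ depth (M_P) + 1`. -/
def CondC (A : Type u) [CommRing A] (n : ℕ)
    (M : Type v) [AddCommGroup M] [Module A M] : Prop :=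
  ∀ P ∈ Module.support A M,
    min (n : WithBot ℕ∞) (heightAt A M P) ≤ (depthAt A M P : WithBot ℕ∞) + 1

/-- A module `M` is almost Cohen-Macaulay if `depth(P, M) = depth (M_P)` for every
`P` in the support of `M` (Kang's definition). -/
def IsAlmostCMModule (A : Type u) [CommRing A]
    (M : Type v) [AddCommGroup M] [Module A M] : Prop :=
  ∀ P ∈ Module.support A M, idealDepth A P.asIdeal M = depthAt A M P

/-- A module `M` is Cohen-Macaulay if `depth (M_P) = dim (M_P)` for every `P` in its
support. -/
def IsCMModule (A : Type u) [CommRing A]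
    (M : Type v) [AddCommGroup M] [Module A M] : Prop :=
  ∀ P ∈ Module.support A M, (depthAt A M P : WithBot ℕ∞) = heightAt A M P

/-- A ring is almost Cohen-Macaulay if it is an almost Cohen-Macaulay module over
itself. -/
abbrev IsAlmostCMRing (A : Type u) [CommRing A] : Prop := IsAlmostCMModule A A

/-- A ring is Cohen-Macaulay if it is a Cohen-Macaulay module over itself, i.e. all its
localizations at primes have depth equal to dimension. -/
abbrev IsCMRing (A : Type u) [CommRing A] : Prop := IsCMModule A A

/-- A ring satisfies `(C_n)` if it does so as a module over itself. -/
abbrev RingCondC (A : Type u) [CommRing A] (n : ℕ) : Prop := CondC A n A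

/-- A ring satisfies `(S_n)` if it does so as a module over itself. -/
abbrev RingSerreCondS (A : Type u) [CommRing A] (n : ℕ) : Prop := SerreCondS A n A

section SerreDepth

open scoped Pointwise
open IsLocalRing RingTheory.Sequence IntermediateField

theorem Ideal.mem_smul_top_of_smul_mem_of_flat {R N : Type*} [CommRing R] [AddCommGroup N]
    [Module R N] [Module.Flat R N] {I J : Ideal R} {a : R} (hJ : ∀ c, a * c ∈ I → c ∈ J) {u : N}
    (h : a • u ∈ (I • ⊤ : Submodule R N)) : u ∈ (J • ⊤ : Submodule R N) := by
  rw [← Submodule.span_univ, ← Set.range_id, Submodule.mem_ideal_smul_span_iff_exists_sum] at h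
  obtain ⟨c, hc, hsum⟩ := h
  let f : Option c.support → R := fun o => o.elim a fun i => c i
  let x : Option c.support → N := fun o => o.elim u fun i => -i
  have hrel : ∑ o, f o • x o = 0 := by
    rw [Fintype.sum_option]
    simp only [f, x, Option.elim, smul_neg, Finset.sum_neg_distrib]
    rw [Finset.sum_coe_sort c.support (fun i => c i • i), ← hsum, Finsupp.sum]
    simp
  obtain ⟨m, b, y, hxy, hb⟩ := Module.Flat.isTrivialRelation_of_sum_smul_eq_zero hrel
  have hu : u = ∑ j, b none j • y j := hxy none
  rw [hu]
  refine Submodule.sum_mem _ fun j _ => Submodule.smul_mem_smul (hJ _ ?_) trivial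
  have hbj := hb j
  rw [Fintype.sum_option] at hbj
  rw [show a * b none j = -∑ i : c.support, f (some i) * b (some i) j from
    eq_neg_of_add_eq_zero_left hbj]
  exact I.neg_mem (I.sum_mem fun i _ => I.mul_mem_right _ (hc i))

theorem IsLocalRing.mem_smul_top_of_forall_mem_sup_pow_smul_top {R : Type*} (S : Type*) {N : Type*}
    [CommRing R] [CommRing S] [IsLocalRing R] [IsLocalRing S] [IsNoetherianRing S] [Algebra R S]
    [IsLocalHom (algebraMap R S)] [AddCommGroup N] [Module R N] [Module S N] [IsScalarTower R S N]
    [Module.Finite S N] (I : Ideal R) {x : N}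
    (h : ∀ i : ℕ, x ∈ ((I ⊔ maximalIdeal R ^ i) • ⊤ : Submodule R N)) :
    x ∈ (I • ⊤ : Submodule R N) := by
  have key (J : Ideal R) (y : N) : y ∈ (J • ⊤ : Submodule R N) ↔
      y ∈ (J.map (algebraMap R S) • ⊤ : Submodule S N) := by
    rw [← Submodule.restrictScalars_mem R (J.map (algebraMap R S) • ⊤ : Submodule S N),
      Ideal.smul_restrictScalars, Submodule.restrictScalars_top]
  rw [key]
  set I' := I.map (algebraMap R S)
  rw [← Submodule.Quotient.mk_eq_zero, ← Submodule.mem_bot S,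
    ← Ideal.iInf_pow_smul_eq_bot_of_isLocalRing (maximalIdeal S) (Ideal.IsPrime.ne_top'),
    Submodule.mem_iInf]
  intro i
  have hi := (key _ _).1 (h i)
  have hle : (I ⊔ maximalIdeal R ^ i).map (algebraMap R S) ≤ I' ⊔ maximalIdeal S ^ i := by
    rw [Ideal.map_sup, Ideal.map_pow]
    have := ((local_hom_TFAE (algebraMap R S)).out 0 2).1 ‹_›
    exact sup_le_sup le_rfl (Ideal.pow_right_mono this i)
  have hi' := Submodule.smul_mono_left hle hi
  rw [Submodule.sup_smul] at hi'
  obtain ⟨y, hy, z, hz, rfl⟩ := Submodule.mem_sup.1 hi'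
  rw [Submodule.Quotient.mk_add, (Submodule.Quotient.mk_eq_zero _).2 hy, zero_add]
  have := Submodule.mem_map_of_mem (f := Submodule.mkQ (I' • ⊤ : Submodule S N)) hz
  rw [Submodule.map_smul''] at this
  exact Submodule.smul_mono le_rfl le_top this

section flat
variable {R S N : Type*} [CommRing R] [CommRing S] [IsLocalRing R] [IsLocalRing S]
    [IsNoetherianRing R] [IsNoetherianRing S] [Algebra R S] [IsLocalHom (algebraMap R S)]
    [AddCommGroup N] [Module R N] [Module S N] [IsScalarTower R S N] [Module.Finite S N]

theorem IsLocalRing.mem_smul_top_of_smul_mem_of_flat [Module.Flat R N] {t : S}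
    (ht : ∀ x : N, t • x ∈ (maximalIdeal R • ⊤ : Submodule R N) →
      x ∈ (maximalIdeal R • ⊤ : Submodule R N)) (I : Ideal R) {x : N}
    (hx : t • x ∈ (I • ⊤ : Submodule R N)) : x ∈ (I • ⊤ : Submodule R N) := by
  refine mem_smul_top_of_forall_mem_sup_pow_smul_top S I fun i => ?_
  have htx : t • x ∈ ((I ⊔ maximalIdeal R ^ i) • ⊤ : Submodule R N) :=
    Submodule.smul_mono_left le_sup_left hx
  have hle : maximalIdeal R ^ i ≤ I ⊔ maximalIdeal R ^ i := le_sup_right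
  generalize I ⊔ maximalIdeal R ^ i = J at htx hle
  clear hx
  induction J using IsNoetherian.induction generalizing x with
  | hgt J ih =>
  by_cases hJtop : J = ⊤
  · simp [hJtop]
  by_cases hJm : maximalIdeal R ≤ J
  · obtain rfl := (maximalIdeal.isMaximal R).eq_of_le hJtop hJm
    exact ht x htx
  -- an element `a` of the socle of `R ⧸ J`
  obtain ⟨a, haJ, ham⟩ : ∃ a ∉ J, ∀ c ∈ maximalIdeal R, a * c ∈ J := by
    classical
    have hex : ∃ j, maximalIdeal R ^ j ≤ J := ⟨i, hle⟩
    have hj0 : Nat.find hex ≠ 0 := fun h0 => by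
      have := Nat.find_spec hex
      rw [h0, pow_zero, Ideal.one_eq_top, top_le_iff] at this
      exact hJtop this
    obtain ⟨j, hj⟩ := Nat.exists_eq_succ_of_ne_zero hj0
    obtain ⟨a, ha, haJ⟩ := SetLike.not_le_iff_exists.1 (Nat.find_min hex (m := j) (by omega))
    refine ⟨a, haJ, fun c hc => ?_⟩
    have := Nat.find_spec hex
    rw [hj, pow_succ] at this
    exact this (Ideal.mul_mem_mul ha hc)
  have hJlt : J < J ⊔ Ideal.span {a} :=
    lt_of_le_of_ne le_sup_left fun h => haJ (h ▸ Ideal.mem_sup_right (Ideal.mem_span_singleton_self a))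
  have hx' := ih _ hJlt (Submodule.smul_mono_left hJlt.le htx) (hle.trans hJlt.le)
  rw [Submodule.sup_smul] at hx'
  obtain ⟨y, hy, z, hz, rfl⟩ := Submodule.mem_sup.1 hx'
  rw [Submodule.ideal_span_singleton_smul] at hz
  obtain ⟨u, -, rfl⟩ := (Submodule.mem_smul_pointwise_iff_exists _ _ _).1 hz
  have hty : t • y ∈ (J • ⊤ : Submodule R N) := by
    rw [← Submodule.restrictScalars_top R S N, ← Ideal.smul_restrictScalars] at hy ⊢
    exact Submodule.smul_mem _ t hy
  have hau : a • t • u ∈ (J • ⊤ : Submodule R N) := by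
    rw [smul_add] at htx
    rw [smul_comm]
    exact (Submodule.add_mem_iff_right _ hty).1 htx
  have hu := ht u (Ideal.mem_smul_top_of_smul_mem_of_flat (J := maximalIdeal R) (fun c hc => by
    by_contra hcm
    obtain ⟨v, rfl⟩ := notMem_maximalIdeal.1 hcm
    exact haJ ((Ideal.mul_unit_mem_iff_mem _ v.isUnit).1 hc)) hau)
  refine Submodule.add_mem _ hy ?_
  have : a • u ∈ ((Ideal.span {a} * maximalIdeal R) • ⊤ : Submodule R N) := by
    rw [Submodule.mul_smul]
    exact Submodule.smul_mem_smul (Ideal.mem_span_singleton_self a) hu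
  refine Submodule.smul_mono_left ?_ this
  rw [Ideal.span_singleton_mul_le_iff]
  exact ham

theorem IsLocalRing.isSMulRegular_of_flat [Module.Flat R N] {t : S}
    (ht : ∀ x : N, t • x ∈ (maximalIdeal R • ⊤ : Submodule R N) →
      x ∈ (maximalIdeal R • ⊤ : Submodule R N)) : IsSMulRegular N t := by
  rw [isSMulRegular_iff_right_eq_zero_of_smul]
  intro x hx
  simpa using mem_smul_top_of_smul_mem_of_flat ht ⊥ (x := x) (by simp [hx])

theorem IsLocalRing.flat_quotSMulTop [Module.Flat R N] {t : S}
    (ht : ∀ x : N, t • x ∈ (maximalIdeal R • ⊤ : Submodule R N) →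
      x ∈ (maximalIdeal R • ⊤ : Submodule R N)) : Module.Flat R (QuotSMulTop t N) := by
  refine Module.Flat.of_forall_isTrivialRelation fun {l f x} h => ?_
  choose x' hx' using fun i => Submodule.Quotient.mk_surjective _ (x i)
  let q : N →ₗ[R] QuotSMulTop t N := (Submodule.mkQ (t • (⊤ : Submodule S N))).restrictScalars R
  have hq : ∀ i, q (x' i) = x i := hx'
  have h0 : q (∑ i, f i • x' i) = 0 := by simpa [hq] using h
  obtain ⟨z, -, hz⟩ := (Submodule.mem_smul_pointwise_iff_exists _ _ _).1
    ((Submodule.Quotient.mk_eq_zero _).1 h0)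
  have hz' := mem_smul_top_of_smul_mem_of_flat ht (Ideal.span (Set.range f)) (x := z) (by
    rw [hz]
    exact Submodule.sum_mem _ fun i _ =>
      Submodule.smul_mem_smul (Ideal.subset_span ⟨i, rfl⟩) trivial)
  obtain ⟨w, hw⟩ : ∃ w : Fin l → N, ∑ i, f i • w i = z := by
    clear hz
    induction hz' using Submodule.smul_induction_on' with
    | smul r hr n _ =>
      obtain ⟨c, rfl⟩ := (Submodule.mem_span_range_iff_exists_fun R).1 hr
      exact ⟨fun i => c i • n, by simp [Finset.sum_smul, smul_smul, mul_comm]⟩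
    | add x _ y _ hx hy =>
      obtain ⟨w, rfl⟩ := hx
      obtain ⟨w', rfl⟩ := hy
      exact ⟨w + w', by simp [Finset.sum_add_distrib]⟩
  obtain ⟨m, a, y, hxy, ha⟩ := Module.Flat.isTrivialRelation_of_sum_smul_eq_zero
    (R := R) (f := f) (x := fun i => x' i - t • w i) (by
      simp only [smul_sub, Finset.sum_sub_distrib, ← hz, ← hw, Finset.smul_sum, smul_comm t,
        sub_self])
  refine ⟨m, a, fun j => q (y j), fun i => ?_, ha⟩
  have h1 : q (t • w i) = 0 :=
    (Submodule.Quotient.mk_eq_zero _).2 (Submodule.smul_mem_pointwise_smul _ _ _ trivial)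
  rw [← hq, ← sub_zero (q (x' i)), ← h1, ← map_sub, show x' i - t • w i = _ from hxy i]
  simp
end flat

theorem IsLocalRing.isWeaklyRegular_and_flat_of_isWeaklyRegular_tensor {R S : Type*} [CommRing R]
    [CommRing S] [IsLocalRing R] [IsLocalRing S] [IsNoetherianRing R] [IsNoetherianRing S]
    [Algebra R S] [IsLocalHom (algebraMap R S)] (ts : List S) :
    ∀ (N : Type*) [AddCommGroup N] [Module R N] [Module S N] [IsScalarTower R S N]
      [Module.Finite S N] [Module.Flat R N],
      IsWeaklyRegular ((S ⧸ (maximalIdeal R).map (algebraMap R S)) ⊗[S] N) ts →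
      IsWeaklyRegular N ts ∧ Module.Flat R (N ⧸ (Ideal.ofList ts • ⊤ : Submodule S N)) := by
  induction ts with
  | nil =>
    intro N _ _ _ _ _ _ _
    refine ⟨.nil _ _, ?_⟩
    have e : (N ⧸ (Ideal.ofList ([] : List S) • ⊤ : Submodule S N)) ≃ₗ[S] N :=
      Submodule.quotEquivOfEqBot _ (by simp)
    exact Module.Flat.of_linearEquiv (e.restrictScalars R)
  | cons t ts ih =>
    intro N _ _ _ _ _ _ h
    rw [isWeaklyRegular_cons_iff] at h
    have ht : ∀ x : N, t • x ∈ (maximalIdeal R • ⊤ : Submodule R N) →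
        x ∈ (maximalIdeal R • ⊤ : Submodule R N) := by
      intro x
      have hreg := ((TensorProduct.quotTensorEquivQuotSMul N
        ((maximalIdeal R).map (algebraMap R S))).isSMulRegular_congr t).1 h.1
      rw [← Submodule.restrictScalars_top R S N, ← Ideal.smul_restrictScalars,
        Submodule.restrictScalars_mem, Submodule.restrictScalars_mem]
      intro hx
      rw [← Submodule.Quotient.mk_eq_zero] at hx ⊢
      exact hreg.right_eq_zero_of_smul hx
    have := flat_quotSMulTop ht
    obtain ⟨h1, h2⟩ := ih (QuotSMulTop t N)
      (((QuotSMulTop.tensorQuotSMulTopEquivQuotSMulTop t _ N).isWeaklyRegular_congr ts).2 h.2)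
    refine ⟨.cons (isSMulRegular_of_flat ht) h1, ?_⟩
    exact Module.Flat.of_linearEquiv
      ((Submodule.quotOfListConsSMulTopEquivQuotSMulTopInner N t ts).restrictScalars R)

theorem IsLocalRing.isWeaklyRegular_append_map_of_flat {R S : Type*} [CommRing R]
    [CommRing S] [IsLocalRing R] [IsLocalRing S] [IsNoetherianRing R] [IsNoetherianRing S]
    [Algebra R S] [IsLocalHom (algebraMap R S)] [Module.Flat R S] {rs : List R} {ts : List S}
    (hrs : IsWeaklyRegular R rs) (hts : IsWeaklyRegular
      (S ⧸ (maximalIdeal R).map (algebraMap R S))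
      (ts.map (Ideal.Quotient.mk ((maximalIdeal R).map (algebraMap R S))))) :
    IsWeaklyRegular S (ts ++ rs.map (algebraMap R S)) := by
  have hts' := (isWeaklyRegular_map_algebraMap_iff (S ⧸ (maximalIdeal R).map (algebraMap R S))
    (S ⧸ (maximalIdeal R).map (algebraMap R S)) ts).1 hts
  obtain ⟨h1, h2⟩ := isWeaklyRegular_and_flat_of_isWeaklyRegular_tensor (R := R) ts S
    (((TensorProduct.rid S _).isWeaklyRegular_congr ts).2 hts')
  rw [isWeaklyRegular_append_iff, isWeaklyRegular_map_algebraMap_iff]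
  exact ⟨h1, ((TensorProduct.lid R _).isWeaklyRegular_congr rs).1
    hrs.isWeaklyRegular_rTensor⟩

/-- Serre's inequality `depth R ≥ min n (dim R)` for a local ring `R`. -/
def IsLocalRing.SerreDepth (n : ℕ) (R : Type*) [CommRing R] [IsLocalRing R] : Prop :=
  ∃ rs : List R, min (n : WithBot ℕ∞) (ringKrullDim R) ≤ (rs.length : ℕ∞) ∧
    (∀ r ∈ rs, r ∈ maximalIdeal R) ∧ IsWeaklyRegular R rs

theorem IsLocalRing.SerreDepth.of_ringEquiv {n : ℕ} {R S : Type*} [CommRing R] [IsLocalRing R]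
    [CommRing S] [IsLocalRing S] (e : R ≃+* S) (h : SerreDepth n R) : SerreDepth n S := by
  obtain ⟨rs, hlen, hmem, hreg⟩ := h
  refine ⟨rs.map e, ?_, ?_, ?_⟩
  · rwa [← ringKrullDim_eq_of_ringEquiv e, List.length_map]
  · simp only [List.mem_map, forall_exists_index, and_imp, forall_apply_eq_imp_iff₂]
    intro r hr
    have := hmem r hr
    rw [mem_maximalIdeal, mem_nonunits_iff] at this ⊢
    rwa [MulEquiv.isUnit_map]
  · exact (e.toAddEquiv.isWeaklyRegular_congr (List.forall₂_map_right_iff.2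
      (List.forall₂_same.2 fun r _ x => by simp))).1 hreg

theorem IsLocalRing.SerreDepth.of_flat {n : ℕ} {R S : Type*} [CommRing R]
    [CommRing S] [IsLocalRing R] [IsLocalRing S] [IsNoetherianRing R] [IsNoetherianRing S]
    [Algebra R S] [IsLocalHom (algebraMap R S)] [Module.Flat R S] (hR : SerreDepth n R)
    [IsLocalRing (S ⧸ (maximalIdeal R).map (algebraMap R S))]
    (hF : SerreDepth n (S ⧸ (maximalIdeal R).map (algebraMap R S))) : SerreDepth n S := by
  obtain ⟨rs, hlen, hmem, hreg⟩ := hR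
  obtain ⟨ts, hlen', hmem', hreg'⟩ := hF
  obtain ⟨ts, rfl⟩ := List.map_surjective_iff.2 (Ideal.Quotient.mk_surjective
    (I := (maximalIdeal R).map (algebraMap R S))) ts
  refine ⟨ts ++ rs.map (algebraMap R S), ?_, ?_,
    isWeaklyRegular_append_map_of_flat hreg hreg'⟩
  · have hdim := Ideal.height_le_height_add_of_liesOver (maximalIdeal R) (maximalIdeal S)
    have hmap : (maximalIdeal S).map (Ideal.Quotient.mk ((maximalIdeal R).map (algebraMap R S))) =
        maximalIdeal _ := map_maximalIdeal_of_surjective _ Ideal.Quotient.mk_surjective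
    rw [hmap] at hdim
    rw [← maximalIdeal_height_eq_ringKrullDim] at hlen hlen' ⊢
    rw [List.length_map] at hlen'
    rw [List.length_append, List.length_map]
    norm_cast at hlen hlen' ⊢
    refine (min_le_min_left _ hdim).trans ?_
    rw [min_le_iff] at *
    push_cast
    rcases hlen with h | h
    · left
      exact h.trans le_add_self
    · rcases hlen' with h' | h'
      · left
        exact h'.trans le_self_add
      · right
        rw [add_comm]
        exact add_le_add h' h
  · simp only [List.mem_append, List.mem_map]
    rintro r (hr | ⟨a, ha, rfl⟩)
    · have := hmem' _ (List.mem_map_of_mem hr)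
      rw [mem_maximalIdeal, mem_nonunits_iff] at this ⊢
      exact fun h => this (h.map _)
    · have hle := ((local_hom_TFAE (algebraMap R S)).out 0 2).1 ‹_›
      exact hle (Ideal.mem_map_of_mem _ (hmem a ha))

/-- A noetherian local ring with principal maximal ideal is Cohen-Macaulay. -/
theorem IsLocalRing.SerreDepth.of_isPrincipal_maximalIdeal (n : ℕ) (R : Type*) [CommRing R]
    [IsLocalRing R] [IsNoetherianRing R] (h : (maximalIdeal R).IsPrincipal) : SerreDepth n R := by
  obtain ⟨t, ht⟩ := h
  have ht : maximalIdeal R = Ideal.span {t} := ht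
  by_cases hreg : IsSMulRegular R t
  · refine ⟨[t], min_le_of_right_le ?_, by simp [ht],
      (isWeaklyRegular_singleton_iff R t).2 hreg⟩
    rw [← maximalIdeal_height_eq_ringKrullDim]
    norm_cast
    have : (maximalIdeal R).IsPrincipal := ⟨t, ht⟩
    exact Ideal.height_le_one_of_isPrincipal_of_mem_minimalPrimes (maximalIdeal R) (maximalIdeal R)
      (by rw [Ideal.minimalPrimes_eq_subsingleton_self]; rfl)
  · refine ⟨[], min_le_of_right_le ?_, by simp, .nil _ _⟩
    rw [isSMulRegular_iff_right_eq_zero_of_smul] at hreg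
    push Not at hreg
    obtain ⟨s, hts, hs⟩ := hreg
    have hInf := Ideal.iInf_pow_eq_bot_of_isLocalRing (maximalIdeal R) (Ideal.IsPrime.ne_top')
    obtain ⟨j, hj⟩ : ∃ j, s ∉ maximalIdeal R ^ j := by
      by_contra! hall
      exact hs (by simpa [hInf] using Submodule.mem_iInf _ |>.2 hall)
    have hnil : IsNilpotent t := by
      classical
      have hex : ∃ j, s ∉ maximalIdeal R ^ j := ⟨j, hj⟩
      obtain ⟨i, hi⟩ : ∃ i, Nat.find hex = i + 1 :=
        Nat.exists_eq_succ_of_ne_zero fun h0 => by simpa [h0] using Nat.find_spec hex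
      have hs1 : s ∈ maximalIdeal R ^ i := not_not.1 (Nat.find_min hex (m := i) (by omega))
      have hs2 : s ∉ maximalIdeal R ^ (i + 1) := hi ▸ Nat.find_spec hex
      rw [ht, Ideal.span_singleton_pow, Ideal.mem_span_singleton] at hs1 hs2
      obtain ⟨u, rfl⟩ := hs1
      have hu : IsUnit u := by
        by_contra hu
        have : u ∈ maximalIdeal R := hu
        rw [ht, Ideal.mem_span_singleton] at this
        obtain ⟨v, rfl⟩ := this
        exact hs2 ⟨v, by ring⟩
      refine ⟨i + 1, hu.mul_left_eq_zero.1 ?_⟩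
      rw [← hts, smul_eq_mul]
      ring
    have : Ring.KrullDimLE 0 R := by
      refine Ring.krullDimLE_zero_iff.2 fun P hP => ?_
      have : P = maximalIdeal R := le_antisymm (le_maximalIdeal hP.ne_top) (by
        rw [ht, Ideal.span_singleton_le_iff_mem]
        exact nilpotent_iff_mem_prime.1 hnil P hP)
      exact this ▸ maximalIdeal.isMaximal R
    simpa using (Ring.krullDimLE_iff (n := 0) (R := R)).1 this

/-- Serre's condition `(S_n)` for a ring, in terms of its local rings. -/
def HasSerreDepth (n : ℕ) (R : Type*) [CommRing R] : Prop :=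
  ∀ (P : Ideal R) [P.IsPrime], SerreDepth n (Localization.AtPrime P)

theorem HasSerreDepth.of_ringEquiv {n : ℕ} {R S : Type*} [CommRing R] [CommRing S] (e : R ≃+* S)
    (h : HasSerreDepth n R) : HasSerreDepth n S := fun P _ =>
  (h (P.comap e)).of_ringEquiv (Localization.localRingEquiv _ P e rfl)

theorem HasSerreDepth.of_isPrincipalIdealRing (n : ℕ) (R : Type*) [CommRing R]
    [IsPrincipalIdealRing R] : HasSerreDepth n R := fun P _ => by
  refine .of_isPrincipal_maximalIdeal n _ ?_
  obtain ⟨t, ht⟩ := IsPrincipalIdealRing.principal P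
  refine ⟨algebraMap R _ t, ?_⟩
  rw [← Localization.AtPrime.map_eq_maximalIdeal]
  refine (congrArg (Ideal.map (algebraMap R (Localization.AtPrime P))) ht).trans ?_
  rw [Ideal.submodule_span_eq, Ideal.map_span, Set.image_singleton, Ideal.submodule_span_eq]

theorem IsLocalRing.SerreDepth.localization_of_flat {n : ℕ} {R S : Type*} [CommRing R] [CommRing S]
    [Algebra R S] [Module.Flat R S] [IsNoetherianRing R] [IsNoetherianRing S] (p : Ideal R)
    [p.IsPrime] (P : Ideal S) [P.IsPrime] [P.LiesOver p]
    (hp : SerreDepth n (Localization.AtPrime p))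
    [IsLocalRing (Localization.AtPrime P ⧸ p.map (algebraMap R (Localization.AtPrime P)))]
    (hF : SerreDepth n (Localization.AtPrime P ⧸ p.map (algebraMap R (Localization.AtPrime P)))) :
    SerreDepth n (Localization.AtPrime P) := by
  let := Localization.AtPrime.algebraOfLiesOver p P
  have hmap : p.map (algebraMap R (Localization.AtPrime P)) =
      (maximalIdeal (Localization.AtPrime p)).map
        (algebraMap (Localization.AtPrime p) (Localization.AtPrime P)) := by
    rw [← Localization.AtPrime.map_eq_maximalIdeal, Ideal.map_map, ← IsScalarTower.algebraMap_eq]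
  have e := Ideal.quotEquivOfEq hmap
  have : IsLocalHom (algebraMap (Localization.AtPrime p) (Localization.AtPrime P)) :=
    Localization.isLocalHom_localRingHom p P (algebraMap R S) Ideal.LiesOver.over
  have := e.isLocalRing
  exact hp.of_flat (hF.of_ringEquiv e)

theorem HasSerreDepth.of_flat {n : ℕ} {R S : Type*} [CommRing R] [CommRing S] [Algebra R S]
    [Module.Flat R S] [IsNoetherianRing R] [IsNoetherianRing S] (hR : HasSerreDepth n R)
    (hF : ∀ (p : Ideal R) [p.IsPrime], HasSerreDepth n (p.Fiber S)) : HasSerreDepth n S := by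
  have key (p : Ideal R) [p.IsPrime] (q : Ideal (p.Fiber S)) [q.IsPrime] : SerreDepth n
      (Localization.AtPrime (q.comap
        (Algebra.TensorProduct.includeRight : S →ₐ[R] p.Fiber S))) := by
    have e := Ideal.Fiber.algEquivAux₂ p q
    rw [Ideal.map_map, ← IsScalarTower.algebraMap_eq] at e
    have := e.toRingEquiv.isLocalRing
    exact .localization_of_flat p _ (hR p) ((hF p q).of_ringEquiv e.toRingEquiv)
  intro P _
  obtain ⟨q, hq⟩ := (PrimeSpectrum.primesOverOrderIsoFiber R S (P.under R)).symm.surjective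
    ⟨P, ‹_›, ⟨rfl⟩⟩
  exact (key _ q.asIdeal).of_ringEquiv
    (Localization.localRingEquiv _ P (.refl S) (congrArg Subtype.val hq))

theorem IsLocalRing.SerreDepth.localization_of_flat_of_le_map {n : ℕ} {R S : Type*} [CommRing R]
    [CommRing S] [Algebra R S] [Module.Flat R S] [IsNoetherianRing R] [IsNoetherianRing S]
    (hR : HasSerreDepth n R) (P : Ideal S) [P.IsPrime]
    (hP : P ≤ (P.under R).map (algebraMap R S)) : SerreDepth n (Localization.AtPrime P) := by
  have hmap : (P.under R).map (algebraMap R (Localization.AtPrime P)) =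
      maximalIdeal (Localization.AtPrime P) := by
    rw [IsScalarTower.algebraMap_eq R S, ← Ideal.map_map, ← le_antisymm hP Ideal.map_comap_le,
      Localization.AtPrime.map_eq_maximalIdeal]
  have e : ResidueField (Localization.AtPrime P) ≃+* _ := Ideal.quotEquivOfEq hmap.symm
  have := e.isLocalRing
  refine SerreDepth.localization_of_flat (P.under R) P (hR _) (.of_ringEquiv e ?_)
  exact .of_isPrincipal_maximalIdeal n (ResidueField (Localization.AtPrime P))
    (IsPrincipalIdealRing.principal _)

section surj
variable {R S : Type*} [CommRing R] [CommRing S] {φ : R →+* S}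

theorem Ideal.map_comap_eq_of_forall_exists_isUnit
    (h : ∀ z, ∃ s, IsUnit (φ s) ∧ φ s * z ∈ φ.range) (I : Ideal S) : (I.comap φ).map φ = I := by
  refine le_antisymm Ideal.map_comap_le fun z hz => ?_
  obtain ⟨s, hs, r, hr⟩ := h z
  rw [← Ideal.unit_mul_mem_iff_mem _ hs, ← hr]
  refine Ideal.mem_map_of_mem _ ?_
  rw [Ideal.mem_comap, hr]
  exact I.mul_mem_left _ hz

theorem IsNoetherianRing.of_forall_exists_isUnit [IsNoetherianRing R]
    (h : ∀ z, ∃ s, IsUnit (φ s) ∧ φ s * z ∈ φ.range) : IsNoetherianRing S :=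
  isNoetherianRing_iff_ideal_fg S |>.2 fun I => by
    rw [← Ideal.map_comap_eq_of_forall_exists_isUnit h I]
    exact Ideal.FG.map (IsNoetherian.noetherian _) φ

theorem IsPrincipalIdealRing.of_forall_exists_isUnit [IsPrincipalIdealRing R]
    (h : ∀ z, ∃ s, IsUnit (φ s) ∧ φ s * z ∈ φ.range) : IsPrincipalIdealRing S :=
  ⟨fun I => by
    rw [← Ideal.map_comap_eq_of_forall_exists_isUnit h I]
    obtain ⟨t, ht⟩ := IsPrincipalIdealRing.principal (I.comap φ)
    exact ⟨φ t, by rw [ht, Ideal.submodule_span_eq, Ideal.map_span, Set.image_singleton]⟩⟩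
end surj

theorem IntermediateField.exists_polynomial_ringHom_tensor_of_adjoin_eq_top {K L : Type*} [Field K]
    [Field L] [Algebra K L] {α : L} (hα : K⟮α⟯ = ⊤) (R : Type*) [CommRing R] [Algebra K R] :
    ∃ φ : Polynomial R →+* R ⊗[K] L, ∀ z, ∃ s, IsUnit (φ s) ∧ φ s * z ∈ φ.range := by
  set φ := Polynomial.eval₂RingHom (algebraMap R (R ⊗[K] L)) (1 ⊗ₜ α)
  have hφ (q : Polynomial K) : φ (q.map (algebraMap K R)) = 1 ⊗ₜ Polynomial.aeval α q := by
    rw [Polynomial.coe_eval₂RingHom, Polynomial.eval₂_map, ← IsScalarTower.algebraMap_eq,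
      ← Polynomial.aeval_def]
    exact Polynomial.aeval_algHom_apply
      (Algebra.TensorProduct.includeRight : L →ₐ[K] R ⊗[K] L) α q
  have hunit (q : Polynomial K) (hq : Polynomial.aeval α q ≠ 0) :
      IsUnit (φ (q.map (algebraMap K R))) := by
    rw [hφ]
    exact (IsUnit.mk0 _ hq).map (Algebra.TensorProduct.includeRight : L →ₐ[K] R ⊗[K] L)
  refine ⟨φ, fun z => ?_⟩
  induction z with
  | zero => exact ⟨1, by simp, 0, by simp⟩
  | add x y hx hy =>
    obtain ⟨s, hs, r, hr⟩ := hx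
    obtain ⟨s', hs', r', hr'⟩ := hy
    refine ⟨s * s', by rw [map_mul]; exact hs.mul hs', r * s' + s * r', ?_⟩
    rw [map_add, map_mul, map_mul, hr, hr', map_mul]
    ring
  | tmul r a =>
    obtain ⟨f, g, rfl⟩ := (mem_adjoin_simple_iff K a).1 (hα ▸ mem_top)
    by_cases hg : Polynomial.aeval α g = 0
    · exact ⟨1, by simp, 0, by simp [hg]⟩
    · refine ⟨g.map (algebraMap K R), hunit g hg, Polynomial.C r * f.map (algebraMap K R), ?_⟩
      rw [map_mul, hφ, hφ, Algebra.TensorProduct.tmul_mul_tmul, one_mul, mul_div_cancel₀ _ hg]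
      simp [φ]

theorem HasSerreDepth.tensor_of_adjoin_eq_top {n : ℕ} {K L : Type*} [Field K] [Field L]
    [Algebra K L] {α : L} (hα : K⟮α⟯ = ⊤) {R : Type*} [CommRing R] [Algebra K R]
    [IsNoetherianRing R] (hR : HasSerreDepth n R) :
    IsNoetherianRing (R ⊗[K] L) ∧ HasSerreDepth n (R ⊗[K] L) := by
  obtain ⟨φ, hφ⟩ := exists_polynomial_ringHom_tensor_of_adjoin_eq_top hα R
  have := IsNoetherianRing.of_forall_exists_isUnit hφ
  refine ⟨this, hR.of_flat fun p _ => ?_⟩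
  obtain ⟨ψ, hψ⟩ := exists_polynomial_ringHom_tensor_of_adjoin_eq_top hα p.ResidueField
  have := IsPrincipalIdealRing.of_forall_exists_isUnit hψ
  exact (HasSerreDepth.of_isPrincipalIdealRing n (p.ResidueField ⊗[K] L)).of_ringEquiv
    (Algebra.TensorProduct.cancelBaseChange K R R p.ResidueField L).symm.toRingEquiv

/-- Rearrangement `(F ⊗ B) ⊗_F K ≃ K ⊗ B`. -/
def tensorTensorRingEquiv (k F K B : Type*) [Field k] [Field F] [Field K] [Algebra k F]
    [Algebra k K] [Algebra F K] [IsScalarTower k F K] [CommRing B] [Algebra k B] :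
    (F ⊗[k] B) ⊗[F] K ≃+* K ⊗[k] B :=
  ((Algebra.TensorProduct.comm F (F ⊗[k] B) K).trans
    (Algebra.TensorProduct.cancelBaseChange k F F K B)).toRingEquiv

theorem tensorTensorRingEquiv_tmul_one (k F K B : Type*) [Field k] [Field F] [Field K]
    [Algebra k F] [Algebra k K] [Algebra F K] [IsScalarTower k F K] [CommRing B] [Algebra k B]
    (a : F) (b : B) :
    tensorTensorRingEquiv k F K B ((a ⊗ₜ b) ⊗ₜ 1) = algebraMap F K a ⊗ₜ b := by
  simp [tensorTensorRingEquiv, Algebra.algebraMap_eq_smul_one]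

theorem tensorTensorRingEquiv_algebraMap (k F K B : Type*) [Field k] [Field F] [Field K]
    [Algebra k F] [Algebra k K] [Algebra F K] [IsScalarTower k F K] [CommRing B] [Algebra k B]
    (x : F ⊗[k] B) : tensorTensorRingEquiv k F K B (algebraMap _ _ x) =
      Algebra.TensorProduct.map (IsScalarTower.toAlgHom k F K) (AlgHom.id k B) x := by
  induction x with
  | zero => simp
  | tmul a b => exact tensorTensorRingEquiv_tmul_one k F K B a b
  | add x y hx hy => rw [map_add, map_add, hx, hy, map_add]

theorem HasSerreDepth.tensor_extend_of_adjoin_eq_top {n : ℕ} {k F L B : Type*} [Field k] [Field F]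
    [Field L] [Algebra k F] [Algebra k L] [Algebra F L] [IsScalarTower k F L] [CommRing B]
    [Algebra k B] [IsNoetherianRing (F ⊗[k] B)] (h : HasSerreDepth n (F ⊗[k] B)) {α : L}
    (hα : F⟮α⟯ = ⊤) : IsNoetherianRing (L ⊗[k] B) ∧ HasSerreDepth n (L ⊗[k] B) := by
  obtain ⟨h, h'⟩ := h.tensor_of_adjoin_eq_top hα
  exact ⟨isNoetherianRing_of_ringEquiv _ (tensorTensorRingEquiv k F L B),
    h'.of_ringEquiv (tensorTensorRingEquiv k F L B)⟩

theorem IntermediateField.adjoin_simple_gen_eq_top {F E : Type*} [Field F] [Field E] [Algebra F E]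
    (α : E) : F⟮AdjoinSimple.gen F α⟯ = ⊤ := by
  apply map_injective F⟮α⟯.val
  rw [adjoin_map, Set.image_singleton, ← AlgHom.fieldRange_eq_map, fieldRange_val]
  simp

theorem IntermediateField.FG.isNoetherianRing_and_hasSerreDepth_tensor {n : ℕ}
    {k K B : Type*} [Field k] [Field K] [Algebra k K] [CommRing B] [Algebra k B]
    [IsNoetherianRing B] (hB : HasSerreDepth n B) {F : IntermediateField k K} (hF : F.FG) :
    IsNoetherianRing (F ⊗[k] B) ∧ HasSerreDepth n (F ⊗[k] B) := by
  refine induction_on_adjoin_fg (fun F => IsNoetherianRing (F ⊗[k] B) ∧ HasSerreDepth n (F ⊗[k] B))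
    ?_ ?_ F hF
  · have e : B ≃+* (⊥ : IntermediateField k K) ⊗[k] B :=
      ((Algebra.TensorProduct.congr (botEquiv k K) .refl).trans
        (Algebra.TensorProduct.lid k B)).symm.toRingEquiv
    exact ⟨isNoetherianRing_of_ringEquiv _ e, hB.of_ringEquiv e⟩
  · intro L x ⟨hL, hL'⟩
    exact HasSerreDepth.tensor_extend_of_adjoin_eq_top (L := L⟮x⟯) hL'
      (adjoin_simple_gen_eq_top x)

theorem TensorProduct.exists_finset_forall_mem_range_map (k K B : Type*) [Field k]
    [Field K] [Algebra k K] [CommRing B] [Algebra k B] (z : K ⊗[k] B) : ∃ T : Finset K,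
      ∀ (F : Type*) [Field F] [Algebra k F] [Algebra F K] [IsScalarTower k F K],
        (T : Set K) ⊆ Set.range (algebraMap F K) →
        z ∈ (Algebra.TensorProduct.map (IsScalarTower.toAlgHom k F K) (AlgHom.id k B)).range := by
  classical
  induction z with
  | zero => exact ⟨∅, fun F _ _ _ _ _ => zero_mem _⟩
  | tmul a b =>
    refine ⟨{a}, fun F _ _ _ _ h => ?_⟩
    obtain ⟨c, rfl⟩ := h (Finset.mem_coe.2 (Finset.mem_singleton_self a))
    exact ⟨c ⊗ₜ b, by simp⟩
  | add x y hx hy =>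
    obtain ⟨T, hT⟩ := hx
    obtain ⟨T', hT'⟩ := hy
    refine ⟨T ∪ T', fun F _ _ _ _ h => ?_⟩
    rw [Finset.coe_union, Set.union_subset_iff] at h
    exact add_mem (hT F h.1) (hT' F h.2)

theorem IsLocalRing.SerreDepth.localization_tensor_of_le_map {n : ℕ} {k F K B : Type*} [Field k]
    [Field F] [Field K] [Algebra k F] [Algebra k K] [Algebra F K] [IsScalarTower k F K] [CommRing B]
    [Algebra k B] [IsNoetherianRing (F ⊗[k] B)] [IsNoetherianRing (K ⊗[k] B)]
    (hF : HasSerreDepth n (F ⊗[k] B)) (P : Ideal (K ⊗[k] B)) [P.IsPrime] {s : Set (K ⊗[k] B)}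
    (hs : Ideal.span s = P) (hsF : ∀ z ∈ s, z ∈ (Algebra.TensorProduct.map
      (IsScalarTower.toAlgHom k F K) (AlgHom.id k B)).range) :
    SerreDepth n (Localization.AtPrime P) := by
  let e := tensorTensorRingEquiv k F K B
  have : IsNoetherianRing ((F ⊗[k] B) ⊗[F] K) := isNoetherianRing_of_ringEquiv _ e.symm
  refine (SerreDepth.localization_of_flat_of_le_map hF (P.comap e) ?_).of_ringEquiv
    (Localization.localRingEquiv _ P e rfl)
  have hle : P ≤ (((P.comap e).under (F ⊗[k] B)).map
      (algebraMap (F ⊗[k] B) ((F ⊗[k] B) ⊗[F] K))).map e := by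
    refine hs.symm.le.trans (Ideal.span_le.2 fun z hz => ?_)
    obtain ⟨x, hx⟩ := hsF z hz
    have hx : e (algebraMap _ _ x) = z := (tensorTensorRingEquiv_algebraMap k F K B x).trans hx
    rw [← hx]
    refine Ideal.mem_map_of_mem _ (Ideal.mem_map_of_mem _ ?_)
    rw [Ideal.mem_comap, Ideal.mem_comap, hx]
    exact hs.le (Ideal.subset_span hz)
  intro z hz
  rw [← Ideal.comap_symm] at hle
  simpa using hle (show e z ∈ P from hz)

theorem HasSerreDepth.tensor_field {n : ℕ} {k K B : Type*} [Field k] [Field K] [Algebra k K]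
    [CommRing B] [Algebra k B] [IsNoetherianRing B] [IsNoetherianRing (K ⊗[k] B)]
    (hB : HasSerreDepth n B) : HasSerreDepth n (K ⊗[k] B) := by
  classical
  intro P _
  obtain ⟨s, hs⟩ := IsNoetherian.noetherian P
  choose T hT using TensorProduct.exists_finset_forall_mem_range_map k K B
  obtain ⟨hF, hF'⟩ :=
    (fg_adjoin_finset (F := k) (s.biUnion T)).isNoetherianRing_and_hasSerreDepth_tensor hB
  refine .localization_tensor_of_le_map hF' P hs fun z hz => hT z _ fun a ha => ?_
  exact ⟨⟨a, subset_adjoin k _ (Finset.mem_coe.2 (Finset.subset_biUnion_of_mem T hz ha))⟩, rfl⟩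

theorem Ideal.Fiber.isNoetherianRing {R S : Type*} [CommRing R] [CommRing S] [Algebra R S]
    [IsNoetherianRing S] (p : Ideal R) [p.IsPrime] : IsNoetherianRing (p.Fiber S) := by
  refine .of_forall_exists_isUnit
    (φ := (Algebra.TensorProduct.includeRight : S →ₐ[R] p.Fiber S).toRingHom) fun z => ?_
  obtain ⟨r, hr, s, hs⟩ := Ideal.Fiber.exists_smul_eq_one_tmul p z
  refine ⟨algebraMap R S r, ?_, s, ?_⟩
  · have : IsUnit (algebraMap R p.ResidueField r) := by
      simpa using hr
    convert this.map (algebraMap p.ResidueField (p.Fiber S)) using 1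
    simp [← IsScalarTower.algebraMap_apply]
  · simp [← hs, Algebra.smul_def]

theorem HasSerreDepth.tensor {n : ℕ} {k A B : Type*} [Field k] [CommRing A] [CommRing B]
    [Algebra k A] [Algebra k B] [IsNoetherianRing A] [IsNoetherianRing B]
    [IsNoetherianRing (A ⊗[k] B)] (hA : HasSerreDepth n A) (hB : HasSerreDepth n B) :
    HasSerreDepth n (A ⊗[k] B) := by
  refine hA.of_flat fun p _ => ?_
  have e : p.Fiber (A ⊗[k] B) ≃+* p.ResidueField ⊗[k] B :=
    (Algebra.TensorProduct.cancelBaseChange k A A p.ResidueField B).toRingEquiv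
  have := Ideal.Fiber.isNoetherianRing (S := A ⊗[k] B) p
  have := isNoetherianRing_of_ringEquiv _ e
  exact (HasSerreDepth.tensor_field (K := p.ResidueField) hB).of_ringEquiv e.symm

theorem Module.support_self (R : Type*) [CommRing R] : Module.support R R = Set.univ := by
  rw [Module.support_eq_zeroLocus, Module.annihilator_eq_bot.2 inferInstance]
  simp

theorem LinearEquiv.supportDim_eq {R M N : Type*} [CommRing R] [AddCommGroup M] [Module R M]
    [AddCommGroup N] [Module R N] (e : M ≃ₗ[R] N) : supportDim R M = supportDim R N := by
  rw [supportDim, e.support_eq, supportDim]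

theorem LinearEquiv.localDepth_eq {R M N : Type*} [CommRing R] [IsLocalRing R] [AddCommGroup M]
    [Module R M] [AddCommGroup N] [Module R N] (e : M ≃ₗ[R] N) :
    localDepth R M = localDepth R N := by
  simp only [localDepth, idealDepth, e.isRegular_congr]

theorem supportDim_self (R : Type*) [CommRing R] : supportDim R R = ringKrullDim R := by
  rw [supportDim, Module.support_self]
  exact Order.krullDim_eq_of_orderIso OrderIso.Set.univ

/-- The localization of a ring as a module over itself is the localized ring. -/
def localizedModuleSelfEquiv {R : Type*} [CommRing R] (S : Submonoid R) :
    LocalizedModule S R ≃ₗ[Localization S] Localization S :=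
  LocalizedModule.equivTensorProduct S R ≪≫ₗ
    TensorProduct.AlgebraTensorModule.rid R (Localization S) (Localization S)

theorem heightAt_self {R : Type*} [CommRing R] (P : PrimeSpectrum R) :
    heightAt R R P = ringKrullDim (Localization.AtPrime P.asIdeal) :=
  (localizedModuleSelfEquiv P.asIdeal.primeCompl).supportDim_eq.trans (supportDim_self _)

theorem depthAt_self {R : Type*} [CommRing R] (P : PrimeSpectrum R) :
    depthAt R R P = localDepth (Localization.AtPrime P.asIdeal)
      (Localization.AtPrime P.asIdeal) :=
  (localizedModuleSelfEquiv P.asIdeal.primeCompl).localDepth_eq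

theorem exists_isRegular_of_le_localDepth {R : Type*} [CommRing R] [IsLocalRing R]
    {m : ℕ} (h : (m : ℕ∞) ≤ localDepth R R) :
    ∃ rs : List R, m ≤ rs.length ∧ (∀ r ∈ rs, r ∈ maximalIdeal R) ∧ IsRegular R rs := by
  obtain _ | m := m
  · exact ⟨[], le_rfl, by simp, IsRegular.nil R R⟩
  · have hlt : (m : ℕ∞) < localDepth R R := (Nat.cast_lt.2 m.lt_succ_self).trans_le h
    obtain ⟨_, ⟨rs, rfl, hmem, hreg⟩, hrs⟩ := lt_sSup_iff.1 hlt
    exact ⟨rs, Nat.cast_lt.1 hrs, hmem, hreg⟩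

theorem IsLocalRing.serreDepth_iff_le_localDepth {n : ℕ} {R : Type*} [CommRing R] [IsLocalRing R] :
    SerreDepth n R ↔
      min (n : WithBot ℕ∞) (ringKrullDim R) ≤ (localDepth R R : WithBot ℕ∞) := by
  constructor
  · rintro ⟨rs, hlen, hmem, hreg⟩
    refine hlen.trans (WithBot.coe_le_coe.2 (le_sSup ⟨rs, rfl, hmem, ?_⟩))
    exact (isRegular_iff_isWeaklyRegular_of_subset_maximalIdeal hmem).2 hreg
  · intro h
    obtain ⟨d, hd⟩ := WithBot.ne_bot_iff_exists.1
      (ne_bot_of_le_ne_bot WithBot.coe_ne_bot (ringKrullDim_nonneg_of_nontrivial (R := R)))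
    obtain ⟨m, hm⟩ : ∃ m : ℕ, (m : ℕ∞) = min (n : ℕ∞) d :=
      ENat.ne_top_iff_exists.1 (ne_top_of_le_ne_top (ENat.natCast_ne_top n) (min_le_left _ _))
    have hmin : min (n : WithBot ℕ∞) (ringKrullDim R) = ((m : ℕ∞) : WithBot ℕ∞) := by
      rw [hm, ← hd, WithBot.coe_min]
      rfl
    rw [hmin] at h
    obtain ⟨rs, hlen, hmem, hreg⟩ :=
      exists_isRegular_of_le_localDepth (WithBot.coe_le_coe.1 h)
    exact ⟨rs, hmin.trans_le (by exact_mod_cast hlen), hmem, hreg.toIsWeaklyRegular⟩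

theorem hasSerreDepth_iff_ringSerreCondS {n : ℕ} {R : Type*} [CommRing R] :
    HasSerreDepth n R ↔ RingSerreCondS R n := by
  simp only [RingSerreCondS, SerreCondS, Module.support_self, Set.mem_univ, forall_const,
    heightAt_self, depthAt_self, ← serreDepth_iff_le_localDepth]
  exact ⟨fun h P => h P.asIdeal, fun h P hP => h ⟨P, hP⟩⟩

theorem SerreCondS.condC_succ {A M : Type*} [CommRing A] [AddCommGroup M] [Module A M] {n : ℕ}
    (h : SerreCondS A n M) : CondC A (n + 1) M := by
  intro P hP
  refine le_trans ?_ (add_le_add_left (h P hP) 1)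
  rw [← min_add_add_right]
  refine min_le_min (by simp) ?_
  exact le_add_of_nonneg_right zero_le_one

end SerreDepth

theorem tensor_condC_succ_of_serreS (k : Type u) [Field k] (n : ℕ)
    (A : Type v) (B : Type w) [CommRing A] [CommRing B] [Algebra k A] [Algebra k B]
    [IsNoetherianRing A] [IsNoetherianRing B] [IsNoetherianRing (A ⊗[k] B)]
    (hA : RingSerreCondS A n) (hB : RingSerreCondS B n) :
    RingCondC (A ⊗[k] B) (n + 1) :=
  (hasSerreDepth_iff_ringSerreCondS.1 <| (hasSerreDepth_iff_ringSerreCondS.2 hA).tensor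
    (hasSerreDepth_iff_ringSerreCondS.2 hB)).condC_succ

end
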